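/- Let V be a finite vertex set, let w be a weight function on V with values in ℕ ∪ {∞}, let s ∈ V, and let a ≤ b be natural numbers. Let f_0 : V → ℕ ∪ {∞} satisfy f_0(v) ≥ d_w(s,v) for every v ∈ V, and define recursively, for r ≥ 0, f_{r+1}(v) = min( f_r(v), min{ f_r(u) + w(u,v) : (u,v) is an edge and a ≤ f_r(u) + w(u,v) < b } ). Then: (i) for every r ≥ 0 and every v ∈ V, f_r(v) ≥ d_w(s,v); (ii) if h ≥ 1 and there is a path P = (x_0, x_1, …, x_m) with m ≤ h such that P is the suffix of some path from s to t := x_m of w-length d_w(s,t) < ∞, f_0(x_0) = d_w(s,x_0), and a ≤ d_w(s,x_j) < b for every 1 ≤ j ≤ m, then f_h(t) = d_w(s,t). -/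

import Mathlib

/-! Bellman–Ford restricted to a window of values `[a, b)`.

The estimates never drop below the true distance, because `d(s,v) ≤ d(s,u) + w(u,v)` on every edge.
For the converse, every prefix of a shortest path is itself shortest (`walkLen_prefix`), so
`d(s,v) = d(s,u) + w(u,v)` along each of its edges `(u,v)` (`dist_edge`). Hence, if the estimate at
`u` is exact after `r` rounds and `d(s,v)` lies in the window, the candidate through `u` is admitted
in round `r + 1` and makes the estimate at `v` exact. Iterating along the suffix (`exact_along`)
makes the estimate at `t` exact after at most `h` rounds, and it remains so since the estimates
are nonincreasing and bounded below by the distance. -/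


open scoped ENNReal ENat

namespace Paper

variable {V : Type*} {α : Type*}

/-- The length of a walk `l` (a list of vertices) under weight `w`:
the sum of the weights of consecutive pairs. -/
def walkLen [AddCommMonoid α] (w : V → V → α) (l : List V) : α :=
  ((l.zip l.tail).map fun p => w p.1 p.2).sum

/-- `l` is a path from `s` to `t` in the weighted digraph `w`: nonempty,
starts at `s`, ends at `t`, and every consecutive pair is an edge (finite weight). -/
def IsPathFrom [AddCommMonoid α] [CompleteLattice α]
    (w : V → V → α) (s t : V) (l : List V) : Prop :=
  l ≠ [] ∧ l.head? = some s ∧ l.getLast? = some t ∧ l.Chain' (fun u v => w u v ≠ ⊤)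

/-- The distance from `s` to `t`: the infimum of lengths of paths from `s` to `t`
(`⊤` if there is no path). -/
noncomputable def dist [AddCommMonoid α] [CompleteLattice α]
    (w : V → V → α) (s t : V) : α :=
  sInf {x | ∃ l, IsPathFrom w s t l ∧ walkLen w l = x}

/-- The `h`-hop distance from `s` to `t`: the infimum of lengths of paths
from `s` to `t` with at most `h` hops. -/
noncomputable def hdist [AddCommMonoid α] [CompleteLattice α]
    (h : ℕ) (w : V → V → α) (s t : V) : α :=
  sInf {x | ∃ l, IsPathFrom w s t l ∧ l.length ≤ h + 1 ∧ walkLen w l = x}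

theorem walkLen_cons_cons (w : V → V → ℕ∞) (x y : V) (l : List V) :
    walkLen w (x :: y :: l) = w x y + walkLen w (y :: l) := by
  simp [walkLen]

theorem walkLen_singleton (w : V → V → ℕ∞) (x : V) : walkLen w [x] = 0 := by
  simp [walkLen]

theorem walkLen_split (w : V → V → ℕ∞) (l : List V) (x : V) (r : List V) :
    walkLen w (l ++ x :: r) = walkLen w (l ++ [x]) + walkLen w (x :: r) := by
  induction l with
  | nil => simp [walkLen_singleton]
  | cons y l ih =>
    cases l with
    | nil => simp [walkLen_cons_cons, walkLen_singleton]
    | cons z l =>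
      simp only [List.cons_append, walkLen_cons_cons] at ih ⊢
      rw [ih, add_assoc]

theorem dist_le_walkLen (w : V → V → ℕ∞) {s t : V} {l : List V} (h : IsPathFrom w s t l) :
    dist w s t ≤ walkLen w l :=
  sInf_le ⟨l, h, rfl⟩

/-- The infimum defining a finite distance is attained, as `ℕ∞` is well-ordered. -/
theorem exists_path_of_dist_ne_top (w : V → V → ℕ∞) {s t : V} (h : dist w s t ≠ ⊤) :
    ∃ l, IsPathFrom w s t l ∧ walkLen w l = dist w s t := by
  have hne : {x | ∃ l, IsPathFrom w s t l ∧ walkLen w l = x}.Nonempty := by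
    by_contra hcon
    rw [Set.not_nonempty_iff_eq_empty] at hcon
    exact h (by rw [dist, hcon, sInf_empty])
  exact csInf_mem hne

theorem dist_triangle (w : V → V → ℕ∞) (s : V) {u v : V} (huv : w u v ≠ ⊤) :
    dist w s v ≤ dist w s u + w u v := by
  by_cases hu : dist w s u = ⊤
  · simp [hu]
  obtain ⟨l, ⟨hl, hs, hlast, hch⟩, hlen⟩ := exists_path_of_dist_ne_top w hu
  obtain ⟨l', rfl⟩ := List.getLast?_eq_some_iff.mp hlast
  have hp : IsPathFrom w s v (l' ++ u :: [v]) := by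
    refine ⟨by simp, ?_, by simp, ?_⟩
    · cases l' <;> simpa using hs
    · exact List.isChain_split.mpr ⟨hch, by simpa using huv⟩
  have h := dist_le_walkLen w hp
  rwa [walkLen_split, hlen, walkLen_cons_cons, walkLen_singleton, add_zero] at h

theorem dist_le_add_walkLen (w : V → V → ℕ∞) (s t : V) (r : List V) :
    ∀ x : V, IsPathFrom w x t (x :: r) → dist w s t ≤ dist w s x + walkLen w (x :: r) := by
  induction r with
  | nil =>
    rintro x ⟨-, -, hlast, -⟩
    obtain rfl : x = t := by simpa using hlast
    simp [walkLen_singleton]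
  | cons y r ih =>
    rintro x ⟨-, -, hlast, hch⟩
    obtain ⟨hxy, hch'⟩ := List.isChain_cons_cons.mp hch
    have h1 := ih y ⟨by simp, by simp, by simpa using hlast, hch'⟩
    rw [walkLen_cons_cons, ← add_assoc]
    exact h1.trans (by gcongr; exact dist_triangle w s hxy)

/-- A prefix of a shortest path is a shortest path. -/
theorem walkLen_prefix (w : V → V → ℕ∞) {s t : V} {l : List V} {x : V} {r : List V}
    (hp : IsPathFrom w s t (l ++ x :: r)) (hlen : walkLen w (l ++ x :: r) = dist w s t)
    (hfin : dist w s t ≠ ⊤) : walkLen w (l ++ [x]) = dist w s x := by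
  obtain ⟨-, hs, hlast, hch⟩ := hp
  obtain ⟨hc1, hc2⟩ := List.isChain_split.mp hch
  have h1 : dist w s x ≤ walkLen w (l ++ [x]) :=
    dist_le_walkLen w ⟨by simp, by cases l <;> simpa using hs, by simp, hc1⟩
  have h2 : dist w s t ≤ dist w s x + walkLen w (x :: r) :=
    dist_le_add_walkLen w s t r x ⟨by simp, by simp, by simpa using hlast, hc2⟩
  rw [walkLen_split] at hlen
  rw [← hlen] at h2 hfin
  have h3 : walkLen w (x :: r) ≠ ⊤ := fun h => hfin (by simp [h])
  exact le_antisymm ((ENat.add_le_add_iff_right h3).mp h2) h1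

/-- Distances from the source are additive along each edge of a shortest path. -/
theorem dist_edge (w : V → V → ℕ∞) {s t : V} {l : List V} {u v : V} {r : List V}
    (hp : IsPathFrom w s t (l ++ u :: v :: r))
    (hlen : walkLen w (l ++ u :: v :: r) = dist w s t)
    (hfin : dist w s t ≠ ⊤) : w u v ≠ ⊤ ∧ dist w s v = dist w s u + w u v := by
  have hu := walkLen_prefix w hp hlen hfin
  have e : l ++ u :: v :: r = (l ++ [u]) ++ v :: r := by simp
  have hv := walkLen_prefix w (e ▸ hp) (e ▸ hlen) hfin
  refine ⟨(List.isChain_cons_cons.mp (List.isChain_split.mp hp.2.2.2).2).1, ?_⟩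
  rw [← hv, List.append_assoc, List.singleton_append, walkLen_split, hu, walkLen_cons_cons,
    walkLen_singleton, add_zero]

/-- Exactness propagates along a suffix of a shortest path, one hop per round. -/
theorem exact_along (w : V → V → ℕ∞) (s t : V) (a b : ℕ) (f : ℕ → V → ℕ∞)
    (hlow : ∀ r v, dist w s v ≤ f r v)
    (hstep : ∀ r u v, w u v ≠ ⊤ → (a : ℕ∞) ≤ f r u + w u v → f r u + w u v < (b : ℕ∞) →
      f (r + 1) v ≤ f r u + w u v)
    (hfin : dist w s t ≠ ⊤) (P : List V) :
    ∀ (x : V) (pre : List V) (r : ℕ), IsPathFrom w s t (pre ++ x :: P) →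
      walkLen w (pre ++ x :: P) = dist w s t → f r x = dist w s x →
      (∀ v ∈ P, (a : ℕ∞) ≤ dist w s v ∧ dist w s v < (b : ℕ∞)) →
      f (r + P.length) t = dist w s t := by
  induction P with
  | nil =>
    intro x pre r hp _ hx _
    obtain rfl : x = t := by simpa using hp.2.2.1
    exact hx
  | cons y P ih =>
    intro x pre r hp hlen hx hwin
    obtain ⟨hxy, hd⟩ := dist_edge w hp hlen hfin
    have hy := hwin y (by simp)
    have hfy : f (r + 1) y = dist w s y := by
      refine le_antisymm ?_ (hlow _ _)
      rw [hd, ← hx] at hy ⊢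
      exact hstep r x y hxy hy.1 hy.2
    have e : pre ++ x :: y :: P = (pre ++ [x]) ++ y :: P := by simp
    have := ih y (pre ++ [x]) (r + 1) (e ▸ hp) (e ▸ hlen) hfy
      fun v hv => hwin v (List.mem_cons_of_mem _ hv)
    rwa [List.length_cons, Nat.add_comm P.length 1, ← Nat.add_assoc]


/-- Restricted Bellman–Ford. With
`f_{r+1}(v) = min( f_r(v), min{ f_r(u) + w(u,v) : edge (u,v), a ≤ f_r(u)+w(u,v) < b } )`
and `f_0 ≥ d_w(s,·)`: (i) `f_r(v) ≥ d_w(s,v)` always; (ii) if `P = (x_0,…,x_m)`, `m ≤ h`,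
is a suffix of a shortest path from `s` to `t = x_m`, `f_0(x_0) = d_w(s,x_0)`, and
`a ≤ d_w(s,x_j) < b` for `1 ≤ j ≤ m`, then `f_h(t) = d_w(s,t)`. -/
theorem statement13 {V : Type*} [Fintype V]
    (w : V → V → ℕ∞) (s : V) (a b : ℕ) (hab : a ≤ b)
    (f : ℕ → V → ℕ∞)
    (h0 : ∀ v : V, dist w s v ≤ f 0 v)
    (hrec : ∀ (r : ℕ) (v : V), f (r+1) v =
      min (f r v)
        (sInf {x : ℕ∞ | ∃ u : V, w u v ≠ ⊤ ∧ x = f r u + w u v ∧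
          (a : ℕ∞) ≤ x ∧ x < (b : ℕ∞)})) :
    (∀ (r : ℕ) (v : V), dist w s v ≤ f r v) ∧
    (∀ (h : ℕ), 1 ≤ h → ∀ (t : V) (P : List V) (hne : P ≠ []),
      P.length ≤ h + 1 →
      P.getLast? = some t →
      (∃ pre : List V, IsPathFrom w s t (pre ++ P) ∧
        walkLen w (pre ++ P) = dist w s t) →
      dist w s t ≠ ⊤ →
      f 0 (P.head hne) = dist w s (P.head hne) →
      (∀ j : ℕ, 1 ≤ j → j < P.length →
        (a : ℕ∞) ≤ dist w s (P.getD j t) ∧ dist w s (P.getD j t) < (b : ℕ∞)) →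
      f h t = dist w s t) := by
  have hlow : ∀ (r : ℕ) (v : V), dist w s v ≤ f r v := by
    intro r
    induction r with
    | zero => exact h0
    | succ r ih =>
      intro v
      rw [hrec]
      refine le_min (ih v) (le_sInf ?_)
      rintro x ⟨u, hu, rfl, -, -⟩
      exact (dist_triangle w s hu).trans (by gcongr; exact ih u)
  refine ⟨hlow, ?_⟩
  intro h _ t P hne hPlen _ hpre hfin hx hwin
  obtain ⟨pre, hp, hlen⟩ := hpre
  have hanti : ∀ v, Antitone fun r => f r v := fun v =>
    antitone_nat_of_succ_le fun r => by rw [hrec]; exact min_le_left _ _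
  cases P with
  | nil => exact absurd rfl hne
  | cons x P =>
    have key := exact_along w s t a b f hlow
      (fun r u v huv ha hb => by
        rw [hrec]; exact (min_le_right _ _).trans (sInf_le ⟨u, huv, rfl, ha, hb⟩))
      hfin P x pre 0 hp hlen hx (by
        intro v hv
        obtain ⟨j, hj, rfl⟩ := List.mem_iff_getElem.mp hv
        simpa [hj] using hwin (j + 1) (by omega) (by simpa using hj))
    refine le_antisymm ?_ (hlow h t)
    rw [← key]
    exact hanti t (by simpa using hPlen)


end Paper
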